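/- Let i_0,…,i_s be distinct elements of {1,…,n} with s ≤ d, and let f_{s+1},…,f_d be homogeneous linear forms in the variables T_0,…,T_d. If the linear forms ℓ_{i_0},…,ℓ_{i_s}, f_{s+1},…,f_d are linearly independent over k, then the images of (X_{i_0},…,X_{i_s}, f_{s+1},…,f_d) form a regular sequence in R = S/(h_1,…,h_n). -/

import Mathlib

open MvPolynomial

/-- The polynomial `h_i = X_i^{p_i} − ℓ_i` in `S = k[T_0,…,T_d, X_1,…,X_n]`, where
`ℓ_i = Σ_j λ_{ij} T_j`; the `T`'s are the variables indexed by `Sum.inl` and the `X`'s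
are the variables indexed by `Sum.inr`. -/
noncomputable def GLh (k : Type*) [Field k] (d n : ℕ) (p : Fin n → ℕ)
    (lam : Fin n → Fin (d + 1) → k) (i : Fin n) :
    MvPolynomial (Fin (d + 1) ⊕ Fin n) k :=
  X (Sum.inr i) ^ p i - ∑ j, C (lam i j) * X (Sum.inl j)

/-- The Geigle–Lenzing complete intersection `R = S/(h_1, …, h_n)`. -/
abbrev GLring (k : Type*) [Field k] (d n : ℕ) (p : Fin n → ℕ)
    (lam : Fin n → Fin (d + 1) → k) : Type _ :=
  MvPolynomial (Fin (d + 1) ⊕ Fin n) k ⧸ Ideal.span (Set.range (GLh k d n p lam))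

theorem GL_vars_weaklyRegular {σ k : Type*} [Field k] (l : List σ) (hl : l.Nodup) :
    RingTheory.Sequence.IsWeaklyRegular (MvPolynomial σ k)
      (l.map (X : σ → MvPolynomial σ k)) := by
  constructor
  intro i hi
  rw [isSMulRegular_quotient_iff_mem_of_smul_mem]
  have hI : (Ideal.ofList ((l.map (X : σ → MvPolynomial σ k)).take i) •
      (⊤ : Submodule (MvPolynomial σ k) (MvPolynomial σ k))) =
      Ideal.span (X '' {j | j ∈ l.take i}) := by
    rw [smul_eq_mul, Ideal.mul_top, ← List.map_take, Ideal.ofList]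
    congr 1
    ext x
    simp [-List.map_take]
  have hil : i < l.length := by simpa using hi
  rw [hI]
  intro x hx
  rw [mem_ideal_span_X_image] at hx ⊢
  intro m hm
  have h1 : m + Finsupp.single l[i] 1 ∈ ((l.map (X : σ → MvPolynomial σ k))[i] • x).support := by
    rw [List.getElem_map, smul_eq_mul, mul_comm, mem_support_iff, coeff_mul_X]
    exact mem_support_iff.mp hm
  obtain ⟨j, hj, hj2⟩ := hx _ h1
  refine ⟨j, hj, ?_⟩
  have hne : l[i] ≠ j := by
    rintro rfl
    rw [Set.mem_ofPred_eq, List.mem_take_iff_getElem] at hj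
    obtain ⟨a, ha, hb⟩ := hj
    have := (hl.getElem_inj_iff).mp hb
    omega
  simpa [Finsupp.single_apply, hne] using hj2

universe u

theorem GL_flat_of_retract {A R B : Type*} [CommRing A] [CommRing R] [CommRing B]
    [Algebra A R] [Algebra A B] [Module.Flat A B] (f : R →+* B)
    (hf : ∀ x : A, f (algebraMap A R x) = algebraMap A B x) (g : B →ₐ[A] R)
    (hgf : ∀ y, g (f y) = y) : Module.Flat A R := by
  let f' : R →ₐ[A] B := { f with commutes' := hf }
  exact Module.Flat.of_retract f'.toLinearMap g.toLinearMap (LinearMap.ext hgf)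

theorem GL_tower {A : Type u} [CommRing A] (n : ℕ) : ∀ (q : Fin n → ℕ) (_ : ∀ i, 0 < q i)
    (a : Fin n → A), ∃ (B : Type u) (_ : CommRing B) (_ : Algebra A B) (b : Fin n → B),
      Module.Flat A B ∧ (∀ i, b i ^ q i = algebraMap A B (a i)) ∧
      ∀ (C : Type u) [CommRing C] [Algebra A C] (c : Fin n → C),
        (∀ i, c i ^ q i = algebraMap A C (a i)) → ∃ f : B →ₐ[A] C, ∀ i, f (b i) = c i := by
  induction n with
  | zero =>
    intro q hq a
    refine ⟨A, inferInstance, inferInstance, fun i => i.elim0, inferInstance,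
      fun i => i.elim0, ?_⟩
    intro C _ _ c _
    exact ⟨Algebra.ofId A C, fun i => i.elim0⟩
  | succ n ih =>
    intro q hq a
    obtain ⟨B, _, _, b, hflat, hb, hlift⟩ := ih (fun i => q i.succ) (fun i => hq _)
      (fun i => a i.succ)
    let g : Polynomial B := Polynomial.X ^ q 0 - Polynomial.C (algebraMap A B (a 0))
    have hg : g.Monic := Polynomial.monic_X_pow_sub_C _ (hq 0).ne'
    have := hg.free_adjoinRoot
    refine ⟨AdjoinRoot g, inferInstance, inferInstance,
      Fin.cons (AdjoinRoot.root g) (fun i => AdjoinRoot.of g (b i)), ?_, ?_, ?_⟩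
    · exact Module.Flat.trans A B (AdjoinRoot g)
    · intro i
      refine Fin.cases ?_ (fun i => ?_) i
      · have h := AdjoinRoot.eval₂_root g
        simp only [g, Polynomial.eval₂_sub, Polynomial.eval₂_pow, Polynomial.eval₂_X,
          Polynomial.eval₂_C, sub_eq_zero] at h
        rw [Fin.cons_zero, h]
        rfl
      · rw [Fin.cons_succ, ← map_pow, hb]
        rfl
    · intro C _ _ c hc
      obtain ⟨f, hf⟩ := hlift C (fun i => c i.succ) (fun i => hc _)
      refine ⟨AdjoinRoot.liftAlgHom g f (c 0) ?_, ?_⟩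
      · simp [g, hc, Polynomial.eval₂_sub]
      · intro i
        refine Fin.cases ?_ (fun i => ?_) i
        · simp
        · simp [hf]

set_option maxHeartbeats 1000000 in
set_option synthInstance.maxHeartbeats 200000 in
/-- Let `i_0, …, i_s` be distinct elements of `{1,…,n}` (an injection
`ι : Fin (s+1) → Fin n`) with `s ≤ d`, and let `f_{s+1}, …, f_d` be homogeneous linear
forms in `T_0,…,T_d` (given by coefficient rows `μ : Fin (d−s) → Fin (d+1) → k`). If the
linear forms `ℓ_{i_0}, …, ℓ_{i_s}, f_{s+1}, …, f_d` are linearly independent over `k`,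
then the images of `(X_{i_0}, …, X_{i_s}, f_{s+1}, …, f_d)` form a regular sequence in
`R = S/(h_1,…,h_n)`. -/
theorem X_f_isRegularSequence (k : Type*) [Field k] (d n : ℕ) (hd : 1 ≤ d)
    (p : Fin n → ℕ) (hp : ∀ i, 0 < p i) (lam : Fin n → Fin (d + 1) → k)
    (s : ℕ) (hs : s ≤ d) (ι : Fin (s + 1) → Fin n) (hι : Function.Injective ι)
    (μ : Fin (d - s) → Fin (d + 1) → k)
    (hindep : LinearIndependent k (Sum.elim (fun t : Fin (s + 1) => lam (ι t)) μ)) :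
    RingTheory.Sequence.IsRegular (GLring k d n p lam)
      (List.ofFn (fun t : Fin (s + 1) =>
          Ideal.Quotient.mk (Ideal.span (Set.range (GLh k d n p lam))) (X (Sum.inr (ι t)))) ++
        List.ofFn (fun l : Fin (d - s) =>
          Ideal.Quotient.mk (Ideal.span (Set.range (GLh k d n p lam)))
            (∑ j, C (μ l j) * X (Sum.inl j)))) := by
  classical
  let v : Fin (s + 1) ⊕ Fin (d - s) → (Fin (d + 1) → k) :=
    Sum.elim (fun t : Fin (s + 1) => lam (ι t)) μ
  let bas : Module.Basis (Fin (s + 1) ⊕ Fin (d - s)) k (Fin (d + 1) → k) :=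
    basisOfLinearIndependentOfCardEqFinrank hindep (by simp; omega)
  have hbas : ∀ x, bas x = v x := fun x => by
    simp [bas, v]
  let A := MvPolynomial (Fin (s + 1) ⊕ Fin (d - s)) k
  let R := GLring k d n p lam
  let π : MvPolynomial (Fin (d + 1) ⊕ Fin n) k →ₐ[k] R :=
    Ideal.Quotient.mkₐ k (Ideal.span (Set.range (GLh k d n p lam)))
  let lin : (Fin (d + 1) → k) →ₗ[k] MvPolynomial (Fin (d + 1) ⊕ Fin n) k :=
    Fintype.linearCombination k (fun j => X (Sum.inl j))
  have hlin : ∀ c, lin c = ∑ j, C (c j) * X (Sum.inl j) := fun c => by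
    simp [lin, Fintype.linearCombination_apply, MvPolynomial.smul_eq_C_mul]
  let θ : (Fin (d + 1) → k) →ₗ[k] A :=
    bas.constr k (Sum.elim (fun t => X (Sum.inl t) ^ p (ι t)) (fun l => X (Sum.inr l)))
  have hθ1 : ∀ t, θ (lam (ι t)) = X (Sum.inl t) ^ p (ι t) := fun t => by
    have := bas.constr_basis k
      (Sum.elim (fun t => X (Sum.inl t) ^ p (ι t)) (fun l => X (Sum.inr l)) : _ → A) (Sum.inl t)
    rwa [hbas] at this
  have hθ2 : ∀ l, θ (μ l) = X (Sum.inr l) := fun l => by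
    have := bas.constr_basis k
      (Sum.elim (fun t => X (Sum.inl t) ^ p (ι t)) (fun l => X (Sum.inr l)) : _ → A) (Sum.inr l)
    rwa [hbas] at this
  have hrel : ∀ i, π (X (Sum.inr i)) ^ p i = π (lin (lam i)) := fun i => by
    rw [← map_pow, ← sub_eq_zero, ← map_sub, hlin]
    exact Ideal.Quotient.eq_zero_iff_mem.mpr (Ideal.subset_span ⟨i, rfl⟩)
  let φ : A →ₐ[k] R := aeval (Sum.elim (fun t => π (X (Sum.inr (ι t)))) (fun l => π (lin (μ l))))
  have hφ1 : ∀ t, φ (X (Sum.inl t)) = π (X (Sum.inr (ι t))) := fun t =>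
    aeval_X _ _
  have hφ2 : ∀ l, φ (X (Sum.inr l)) = π (lin (μ l)) := fun l =>
    aeval_X _ _
  have hφθ : ∀ c, φ (θ c) = π (lin c) := by
    have : φ.toLinearMap ∘ₗ θ = π.toLinearMap ∘ₗ lin := by
      refine bas.ext fun x => ?_
      rw [hbas]
      rcases x with t | l
      · change φ (θ (lam (ι t))) = π (lin (lam (ι t)))
        rw [hθ1, map_pow, hφ1, hrel]
      · change φ (θ (μ l)) = π (lin (μ l))
        rw [hθ2, hφ2]
    exact fun c => LinearMap.congr_fun this c
  let algAR : Algebra A R := φ.toRingHom.toAlgebra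
  let modAR : Module A R := algAR.toModule
  have halg : ∀ x, algebraMap A R x = φ x := fun x => rfl
  let q : Fin n → ℕ := fun i => if i ∈ Set.range ι then 1 else p i
  let a : Fin n → A := fun i => if h : ∃ t, ι t = i then X (Sum.inl h.choose) else θ (lam i)
  have ha1 : ∀ t, a (ι t) = X (Sum.inl t) := fun t => by
    have h : ∃ t', ι t' = ι t := ⟨t, rfl⟩
    simp only [a, dif_pos h]
    rw [hι h.choose_spec]
  have hq1 : ∀ t, q (ι t) = 1 := fun t => by simp [q]
  have ha2 : ∀ i, i ∉ Set.range ι → a i = θ (lam i) := fun i hi => dif_neg hi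
  have hq2 : ∀ i, i ∉ Set.range ι → q i = p i := fun i hi => if_neg hi
  have hq : ∀ i, 0 < q i := fun i => by
    simp only [q]; split_ifs
    · exact one_pos
    · exact hp i
  obtain ⟨B, _, _, b, hflat, hb, hlift⟩ := GL_tower n q hq a
  obtain ⟨g, hg⟩ := hlift R (fun i => π (X (Sum.inr i))) (fun i => by
    by_cases hi : i ∈ Set.range ι
    · obtain ⟨t, rfl⟩ := hi
      rw [hq1, ha1, halg, hφ1, pow_one]
    · rw [hq2 i hi, ha2 i hi, halg, hφθ, hrel])
  have hb1 : ∀ t, b (ι t) = algebraMap A B (X (Sum.inl t)) := fun t => by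
    have := hb (ι t)
    rwa [hq1, ha1, pow_one] at this
  -- the map back
  let F : MvPolynomial (Fin (d + 1) ⊕ Fin n) k →+* B :=
    eval₂Hom ((algebraMap A B).comp C)
      (Sum.elim (fun j => algebraMap A B (θ (Pi.single j 1))) b)
  have hFC : ∀ c, F (C c) = algebraMap A B (C c) := fun c => by simp [F]
  have hFT : ∀ j, F (X (Sum.inl j)) = algebraMap A B (θ (Pi.single j 1)) := fun j => by simp [F]
  have hFX : ∀ i, F (X (Sum.inr i)) = b i := fun j => by simp [F]
  have hFlin : ∀ c, F (lin c) = algebraMap A B (θ c) := fun c => by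
    rw [hlin, map_sum]
    conv_rhs => rw [pi_eq_sum_univ' c, map_sum, map_sum]
    refine Finset.sum_congr rfl fun j _ => ?_
    rw [map_mul, hFC, hFT, ← map_mul, map_smul, MvPolynomial.smul_eq_C_mul]
  have hFh : ∀ x ∈ Ideal.span (Set.range (GLh k d n p lam)), F x = 0 := by
    intro x hx
    have : Ideal.span (Set.range (GLh k d n p lam)) ≤ RingHom.ker F := by
      rw [Ideal.span_le]
      rintro _ ⟨i, rfl⟩
      rw [SetLike.mem_coe, RingHom.mem_ker, GLh, ← hlin, map_sub, map_pow, hFX, hFlin, sub_eq_zero]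
      by_cases hi : i ∈ Set.range ι
      · obtain ⟨t, rfl⟩ := hi
        rw [hb1, hθ1, map_pow]
      · rw [← ha2 i hi, ← hb, hq2 i hi]
    exact this hx
  let f : R →+* B := Ideal.Quotient.lift _ F hFh
  have hf : ∀ x, f (π x) = F x := fun x => rfl
  have hfalg : ∀ x : A, f (algebraMap A R x) = algebraMap A B x := by
    have : f.comp (algebraMap A R) = algebraMap A B := by
      refine MvPolynomial.ringHom_ext (fun c => ?_) (fun x => ?_)
      · have : algebraMap A R (C c) = π (C c) := by
          rw [halg]
          exact (φ.commutes c).trans (π.commutes c).symm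
        rw [RingHom.comp_apply, this, hf, hFC]
      · rcases x with t | l
        · rw [RingHom.comp_apply, halg, hφ1, hf, hFX, hb1]
        · rw [RingHom.comp_apply, halg, hφ2, hf, hFlin, hθ2]
    exact fun x => RingHom.congr_fun this x
  have hgf : ∀ y, g (f y) = y := by
    have : (g.toRingHom.comp F) = π.toRingHom := by
      refine MvPolynomial.ringHom_ext (fun c => ?_) (fun x => ?_)
      · change g (F (C c)) = π (C c)
        rw [hFC, g.commutes, halg]
        exact (φ.commutes c).trans (π.commutes c).symm
      · rcases x with j | i
        · change g (F (X (Sum.inl j))) = π (X (Sum.inl j))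
          rw [hFT, g.commutes, halg, hφθ]
          congr 1
          simp [lin]
        · change g (F (X (Sum.inr i))) = π (X (Sum.inr i))
          rw [hFX, hg]
    intro y
    obtain ⟨x, rfl⟩ := Ideal.Quotient.mk_surjective y
    exact RingHom.congr_fun this x
  have hflatR : Module.Flat A R :=
    GL_flat_of_retract f hfalg g hgf
  let L : List (Fin (s + 1) ⊕ Fin (d - s)) := List.ofFn Sum.inl ++ List.ofFn Sum.inr
  have hL : L.Nodup := by
    refine List.Nodup.append (List.nodup_ofFn.mpr Sum.inl_injective)
      (List.nodup_ofFn.mpr Sum.inr_injective) ?_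
    intro x hx hy
    simp only [List.mem_ofFn] at hx hy
    obtain ⟨_, rfl⟩ := hx
    obtain ⟨_, h⟩ := hy
    cases h
  have hreg := (GL_vars_weaklyRegular (k := k) L hL)
  have hreg2 := RingTheory.Sequence.IsWeaklyRegular.of_flat (S := R) hreg
  have hlist : (L.map (X : _ → A)).map (algebraMap A R) =
      (List.ofFn (fun t : Fin (s + 1) =>
          Ideal.Quotient.mk (Ideal.span (Set.range (GLh k d n p lam))) (X (Sum.inr (ι t)))) ++
        List.ofFn (fun l : Fin (d - s) =>
          Ideal.Quotient.mk (Ideal.span (Set.range (GLh k d n p lam)))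
            (∑ j, C (μ l j) * X (Sum.inl j)))) := by
    simp only [L, List.map_append, List.map_ofFn]
    congr 2
    · funext t
      exact hφ1 t
    · funext l
      exact (hφ2 l).trans (by rw [hlin]; rfl)
  rw [hlist] at hreg2
  refine ⟨hreg2, ?_⟩
  -- nontriviality: evaluate at the origin
  let ε : MvPolynomial (Fin (d + 1) ⊕ Fin n) k →+* k := constantCoeff
  have hε : ∀ x ∈ Ideal.span (Set.range (GLh k d n p lam)), ε x = 0 := by
    intro x hx
    have : Ideal.span (Set.range (GLh k d n p lam)) ≤ RingHom.ker ε := by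
      rw [Ideal.span_le]
      rintro _ ⟨i, rfl⟩
      simp [GLh, ε, (hp i).ne']
    exact this hx
  let e : R →+* k := Ideal.Quotient.lift _ ε hε
  intro htop
  rw [smul_eq_mul, Ideal.mul_top] at htop
  have hle : Ideal.ofList (List.ofFn (fun t : Fin (s + 1) =>
          Ideal.Quotient.mk (Ideal.span (Set.range (GLh k d n p lam))) (X (Sum.inr (ι t)))) ++
        List.ofFn (fun l : Fin (d - s) =>
          Ideal.Quotient.mk (Ideal.span (Set.range (GLh k d n p lam)))
            (∑ j, C (μ l j) * X (Sum.inl j)))) ≤ RingHom.ker e := by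
    rw [Ideal.ofList, Ideal.span_le]
    intro x hx
    simp only [Set.mem_ofPred_eq, List.mem_append, List.mem_ofFn] at hx
    rcases hx with ⟨t, rfl⟩ | ⟨l, rfl⟩
    · rw [SetLike.mem_coe, RingHom.mem_ker]
      change ε (X (Sum.inr (ι t))) = 0
      simp [ε]
    · rw [SetLike.mem_coe, RingHom.mem_ker]
      change ε (∑ j, C (μ l j) * X (Sum.inl j)) = 0
      simp [ε]
  rw [← htop] at hle
  have h1 : e 1 = 0 := hle (Submodule.mem_top (x := (1 : R)))
  rw [map_one] at h1
  exact one_ne_zero h1
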